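/- arXiv:1111.7119 — 2 statements merged into one kernel-verified Lean document; each statement's English description precedes it below -/
import Mathlib

section
/- Let n be a natural number, X and Y nonempty sets, and A : X → ℝⁿ, B : Y → ℝⁿ arbitrary functions. Then A(x) · B(y) = 1 for all x ∈ X and y ∈ Y (Euclidean dot product in ℝⁿ) if and only if there exist a natural number s with 0 ≤ s ≤ n − 1, an n × s real matrix C of rank s, a vector d ∈ ℝⁿ, and functions u¹, …, uˢ : X → ℝ such that the constant function 1 together with u¹, …, uˢ form a linearly independent family in the vector space of real-valued functions on X, and: A(x) = C·u(x) + d for all x ∈ X (where u(x) = (u¹(x), …, uˢ(x))ᵀ), B(y)ᵀ C = 0 for all y ∈ Y, and B(y) · d = 1 for all y ∈ Y. -/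
open Matrix

/-- The coordinate functions of a spanning family with respect to a basis, together with the
constant function `1`, are linearly independent as soon as the family vanishes somewhere. -/
theorem linearIndependent_one_cons_coord {K V X : Type*} [Field K] [AddCommGroup V] [Module K V]
    {s : ℕ} (b : Module.Basis (Fin s) K V) {v : X → V}
    (hv : Submodule.span K (Set.range v) = ⊤) {x₀ : X} (hx₀ : v x₀ = 0) :
    LinearIndependent K
      (Fin.cons (1 : X → K) (fun i x => b.repr (v x) i) : Fin (s + 1) → X → K) := by
  rw [Fintype.linearIndependent_iff]
  intro c hc
  have hc' (x : X) : c 0 + ∑ i : Fin s, c i.succ * b.repr (v x) i = 0 := by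
    simpa [Fin.sum_univ_succ] using congrFun hc x
  have h0 : c 0 = 0 := by simpa [hx₀] using hc' x₀
  have hf : ∑ i : Fin s, c i.succ • b.coord i = 0 := by
    refine LinearMap.ext_on_range hv fun x => ?_
    simpa [h0] using hc' x
  refine Fin.cases h0 fun j => ?_
  simpa [Finsupp.single_apply] using LinearMap.congr_fun hf (b j)

/-- The matrix whose columns form a basis of a subspace has rank the number of columns. -/
theorem rank_of_basis_columns {n s : ℕ} {W : Submodule ℝ (Fin n → ℝ)}
    (b : Module.Basis (Fin s) ℝ W) :
    (Matrix.of fun i j => (b j : Fin n → ℝ) i).rank = s := by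
  have hli : LinearIndependent ℝ (Matrix.of fun j => (b j : Fin n → ℝ)).row :=
    b.linearIndependent.map' W.subtype W.ker_subtype
  rw [← Matrix.rank_transpose]
  exact hli.rank_matrix.trans (Fintype.card_fin s)

/-- Lemma 1 (separation of variables): for nonempty `X`, `Y` and arbitrary maps
`A : X → ℝⁿ`, `B : Y → ℝⁿ`, one has `A x ⬝ᵥ B y = 1` for all `x, y` iff there are
`s ≤ n - 1`, an `n × s` matrix `C` of rank `s`, a vector `d` and functions
`u¹, …, uˢ : X → ℝ` such that `1, u¹, …, uˢ` are linearly independent,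
`A x = C ⬝ u x + d`, `(B y)ᵀ C = 0` and `B y ⬝ᵥ d = 1`. -/
theorem separation_of_variables_lemma (n : ℕ) (X Y : Type*) [Nonempty X] [Nonempty Y]
    (A : X → Fin n → ℝ) (B : Y → Fin n → ℝ) :
    (∀ (x : X) (y : Y), A x ⬝ᵥ B y = 1) ↔
      ∃ s : ℕ, s ≤ n - 1 ∧
        ∃ (C : Matrix (Fin n) (Fin s) ℝ) (d : Fin n → ℝ) (u : X → Fin s → ℝ),
          C.rank = s ∧
          LinearIndependent ℝ
            (Fin.cons (1 : X → ℝ) (fun i x => u x i) : Fin (s + 1) → X → ℝ) ∧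
          (∀ x : X, A x = C.mulVec (u x) + d) ∧
          (∀ y : Y, Matrix.vecMul (B y) C = 0) ∧
          (∀ y : Y, B y ⬝ᵥ d = 1) := by
  constructor
  · intro h
    obtain ⟨x₀⟩ := ‹Nonempty X›
    obtain ⟨y₀⟩ := ‹Nonempty Y›
    let W : Submodule ℝ (Fin n → ℝ) := Submodule.span ℝ (Set.range fun x => A x - A x₀)
    let v : X → W := fun x => ⟨A x - A x₀, Submodule.subset_span ⟨x, rfl⟩⟩
    have hv : Submodule.span ℝ (Set.range v) = ⊤ := by
      apply Submodule.map_injective_of_injective W.injective_subtype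
      rw [Submodule.map_span, Submodule.map_top, Submodule.range_subtype, ← Set.range_comp]
      rfl
    have horth (y : Y) (w : Fin n → ℝ) (hw : w ∈ W) : B y ⬝ᵥ w = 0 := by
      induction hw using Submodule.span_induction with
      | mem w hw =>
        obtain ⟨x, rfl⟩ := hw
        rw [dotProduct_sub, dotProduct_comm, h, dotProduct_comm, h, sub_self]
      | zero => exact dotProduct_zero _
      | add w z _ _ hw hz => rw [dotProduct_add, hw, hz, add_zero]
      | smul a w _ hw => rw [dotProduct_smul, hw, smul_zero]
    have hne : W ≠ ⊤ := by
      intro hW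
      have h0 := horth y₀ (A x₀) (hW ▸ Submodule.mem_top)
      rw [dotProduct_comm, h] at h0
      exact one_ne_zero h0
    have hs : Module.finrank ℝ W < n := by
      simpa using Submodule.finrank_lt hne
    let b := Module.finBasis ℝ W
    refine ⟨Module.finrank ℝ W, Nat.le_sub_one_of_lt hs,
      Matrix.of fun i j => (b j : Fin n → ℝ) i, A x₀, fun x => b.repr (v x),
      rank_of_basis_columns b,
      linearIndependent_one_cons_coord b hv (x₀ := x₀) (Subtype.ext (sub_self _)), ?_, ?_, ?_⟩
    · intro x
      have hx : ∑ j, b.repr (v x) j • (b j : Fin n → ℝ) = A x - A x₀ := by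
        have hsum := congrArg W.subtype (b.sum_repr (v x))
        rw [map_sum] at hsum
        exact hsum
      rw [← sub_eq_iff_eq_add, ← hx]
      ext i
      simp [Matrix.mulVec, dotProduct, mul_comm]
    · intro y
      ext j
      exact horth y (b j) (b j).2
    · intro y
      rw [dotProduct_comm, h]
  · rintro ⟨s, -, C, d, u, -, -, hA, hC, hd⟩ x y
    rw [dotProduct_comm, hA, dotProduct_add, dotProduct_mulVec, hC, zero_dotProduct, hd, zero_add]
end

section
/- Let v, B : ℝ³ → ℝ³ be differentiable vector fields and P : ℝ³ → ℝ a differentiable function satisfying everywhere: (v·∇)v − (B·∇)B + ∇P = 0, (B·∇)v = (v·∇)B, div v = 0, div B = 0. Let f : ℝ → ℝ be differentiable and let φ : ℝ³ → ℝ be differentiable with (v·∇)φ = 0 and (B·∇)φ = 0 everywhere. Define ṽ = sinh(f∘φ) B + cosh(f∘φ) v and B̃ = cosh(f∘φ) B + sinh(f∘φ) v. Then (ṽ, B̃, P) also satisfy everywhere: (ṽ·∇)ṽ − (B̃·∇)B̃ + ∇P = 0, (B̃·∇)ṽ = (ṽ·∇)B̃, div ṽ = 0, div B̃ = 0. -/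
open Matrix

/-- The convective derivative `(u·∇)w : x ↦ (Dw(x))(u(x))` of a vector field. -/
noncomputable def convDeriv (u w : (Fin 3 → ℝ) → (Fin 3 → ℝ)) (x : Fin 3 → ℝ) : Fin 3 → ℝ :=
  fderiv ℝ w x (u x)

/-- The divergence `div w(x)`, the trace of `Dw(x)`, computed as the sum of the
diagonal entries of the Jacobian matrix. -/
noncomputable def vecDiv (w : (Fin 3 → ℝ) → (Fin 3 → ℝ)) (x : Fin 3 → ℝ) : ℝ :=
  ∑ i : Fin 3, fderiv ℝ w x (Pi.single i 1) i

/-- The gradient `∇P` of a scalar function, the vector of partial derivatives. -/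
noncomputable def grad (P : (Fin 3 → ℝ) → ℝ) (x : Fin 3 → ℝ) : Fin 3 → ℝ :=
  fun i => fderiv ℝ P x (Pi.single i 1)

/-- The derivative of a combination of two vector fields whose coefficients are functions
of a scalar `φ`. -/
theorem fderiv_comp_smul_add_comp_smul {E F : Type*} [NormedAddCommGroup E] [NormedSpace ℝ E]
    [NormedAddCommGroup F] [NormedSpace ℝ F] {g h : ℝ → ℝ} {φ : E → ℝ} {B v : E → F} {x : E}
    (hg : DifferentiableAt ℝ g (φ x)) (hh : DifferentiableAt ℝ h (φ x))
    (hφ : DifferentiableAt ℝ φ x) (hB : DifferentiableAt ℝ B x)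
    (hv : DifferentiableAt ℝ v x) (w : E) :
    fderiv ℝ (fun y => g (φ y) • B y + h (φ y) • v y) x w =
      g (φ x) • fderiv ℝ B x w + h (φ x) • fderiv ℝ v x w +
        fderiv ℝ φ x w • (deriv g (φ x) • B x + deriv h (φ x) • v x) := by
  have hgφ := hg.hasDerivAt.comp_hasFDerivAt x hφ.hasFDerivAt
  have hhφ := hh.hasDerivAt.comp_hasFDerivAt x hφ.hasFDerivAt
  have key := (hgφ.smul hB.hasFDerivAt).add (hhφ.smul hv.hasFDerivAt)
  refine (congrArg (fun L : E →L[ℝ] F => L w) key.fderiv).trans ?_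
  simp only [Function.comp_apply, _root_.add_apply, _root_.smul_apply,
    ContinuousLinearMap.smulRight_apply, smul_eq_mul]
  module

/-- If `φ` is constant along `B` and `v`, its derivative vanishes on their combinations, so the
convective derivative along such a combination ignores the variation of the coefficients. -/
theorem convDeriv_comp_smul_add_comp_smul {g h : ℝ → ℝ} {φ : (Fin 3 → ℝ) → ℝ}
    {B v : (Fin 3 → ℝ) → (Fin 3 → ℝ)} (hg : Differentiable ℝ g) (hh : Differentiable ℝ h)
    (hφ : Differentiable ℝ φ) (hB : Differentiable ℝ B) (hv : Differentiable ℝ v)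
    (hφB : ∀ x, fderiv ℝ φ x (B x) = 0) (hφv : ∀ x, fderiv ℝ φ x (v x) = 0)
    (a b : (Fin 3 → ℝ) → ℝ) (x : Fin 3 → ℝ) :
    convDeriv (fun y => a y • B y + b y • v y) (fun y => g (φ y) • B y + h (φ y) • v y) x =
      g (φ x) • (a x • convDeriv B B x + b x • convDeriv v B x) +
        h (φ x) • (a x • convDeriv B v x + b x • convDeriv v v x) := by
  simp only [convDeriv, fderiv_comp_smul_add_comp_smul (hg _) (hh _) (hφ x) (hB x) (hv x),
    map_add, map_smul, hφB, hφv, smul_zero, add_zero, zero_smul]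

/-- Solenoidality is preserved by combinations whose coefficients are functions of a scalar
constant along both fields. -/
theorem vecDiv_comp_smul_add_comp_smul {g h : ℝ → ℝ} {φ : (Fin 3 → ℝ) → ℝ}
    {B v : (Fin 3 → ℝ) → (Fin 3 → ℝ)} (hg : Differentiable ℝ g) (hh : Differentiable ℝ h)
    (hφ : Differentiable ℝ φ) (hB : Differentiable ℝ B) (hv : Differentiable ℝ v)
    (hφB : ∀ x, fderiv ℝ φ x (B x) = 0) (hφv : ∀ x, fderiv ℝ φ x (v x) = 0)
    (hdivB : ∀ x, vecDiv B x = 0) (hdivv : ∀ x, vecDiv v x = 0) (x : Fin 3 → ℝ) :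
    vecDiv (fun y => g (φ y) • B y + h (φ y) • v y) x = 0 := by
  have expand (u : Fin 3 → ℝ) :
      ∑ i, fderiv ℝ φ x (Pi.single i 1) * u i = fderiv ℝ φ x u := by
    conv_rhs => rw [pi_eq_sum_univ' u]
    simp [map_sum, map_smul, mul_comm, Pi.single]
  have eB := (expand (B x)).trans (hφB x)
  have ev := (expand (v x)).trans (hφv x)
  have dB := hdivB x
  have dv := hdivv x
  simp only [vecDiv, fderiv_comp_smul_add_comp_smul (hg _) (hh _) (hφ x) (hB x) (hv x),
    Fin.sum_univ_three, Pi.add_apply, Pi.smul_apply, smul_eq_mul] at *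
  linear_combination g (φ x) * dB + h (φ x) * dv + deriv g (φ x) * eB + deriv h (φ x) * ev

/-- The hyperbolic-rotation symmetry (Transform) of the stationary incompressible ideal MHD
system: if `(v, B, P)` solves the system and `φ` is constant along streamlines and magnetic
lines, then `ṽ = sinh(f∘φ) B + cosh(f∘φ) v`, `B̃ = cosh(f∘φ) B + sinh(f∘φ) v` together with
the same `P` again solve the system. -/
theorem mhd_hyperbolic_rotation_symmetry (v B : (Fin 3 → ℝ) → (Fin 3 → ℝ))
    (P : (Fin 3 → ℝ) → ℝ) (hv : Differentiable ℝ v) (hB : Differentiable ℝ B)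
    (hP : Differentiable ℝ P)
    (heq1 : ∀ x, convDeriv v v x - convDeriv B B x + grad P x = 0)
    (heq2 : ∀ x, convDeriv B v x = convDeriv v B x)
    (heq3 : ∀ x, vecDiv v x = 0) (heq4 : ∀ x, vecDiv B x = 0)
    (f : ℝ → ℝ) (hf : Differentiable ℝ f)
    (φ : (Fin 3 → ℝ) → ℝ) (hφ : Differentiable ℝ φ)
    (hφv : ∀ x, fderiv ℝ φ x (v x) = 0) (hφB : ∀ x, fderiv ℝ φ x (B x) = 0) :
    (∀ x, convDeriv
        (fun y => Real.sinh (f (φ y)) • B y + Real.cosh (f (φ y)) • v y)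
        (fun y => Real.sinh (f (φ y)) • B y + Real.cosh (f (φ y)) • v y) x -
      convDeriv
        (fun y => Real.cosh (f (φ y)) • B y + Real.sinh (f (φ y)) • v y)
        (fun y => Real.cosh (f (φ y)) • B y + Real.sinh (f (φ y)) • v y) x +
      grad P x = 0) ∧
    (∀ x, convDeriv
        (fun y => Real.cosh (f (φ y)) • B y + Real.sinh (f (φ y)) • v y)
        (fun y => Real.sinh (f (φ y)) • B y + Real.cosh (f (φ y)) • v y) x =
      convDeriv
        (fun y => Real.sinh (f (φ y)) • B y + Real.cosh (f (φ y)) • v y)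
        (fun y => Real.cosh (f (φ y)) • B y + Real.sinh (f (φ y)) • v y) x) ∧
    (∀ x, vecDiv (fun y => Real.sinh (f (φ y)) • B y + Real.cosh (f (φ y)) • v y) x = 0) ∧
    (∀ x, vecDiv (fun y => Real.cosh (f (φ y)) • B y + Real.sinh (f (φ y)) • v y) x = 0) := by
  have hs : Differentiable ℝ fun t => Real.sinh (f t) := hf.sinh
  have hc : Differentiable ℝ fun t => Real.cosh (f t) := hf.cosh
  refine ⟨fun x => ?_, fun x => ?_,
    vecDiv_comp_smul_add_comp_smul (g := fun t => Real.sinh (f t)) (h := fun t => Real.cosh (f t))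
      hs hc hφ hB hv hφB hφv heq4 heq3,
    vecDiv_comp_smul_add_comp_smul (g := fun t => Real.cosh (f t)) (h := fun t => Real.sinh (f t))
      hc hs hφ hB hv hφB hφv heq4 heq3⟩
  · rw [convDeriv_comp_smul_add_comp_smul hs hc hφ hB hv hφB hφv,
      convDeriv_comp_smul_add_comp_smul hc hs hφ hB hv hφB hφv, ← heq1 x]
    have hcs := Real.cosh_sq (f (φ x))
    ext i
    simp only [Pi.add_apply, Pi.sub_apply, Pi.smul_apply, smul_eq_mul]
    linear_combination (convDeriv v v x i - convDeriv B B x i) * hcs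
  · rw [convDeriv_comp_smul_add_comp_smul hs hc hφ hB hv hφB hφv,
      convDeriv_comp_smul_add_comp_smul hc hs hφ hB hv hφB hφv, heq2 x]
    module
end
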